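/- Let X and Y be topological spaces and ψ : X → Y a function. Then ψ is h-continuous if and only if for every subset C of Y, Cl_h(ψ⁻¹(C)) ⊆ ψ⁻¹(closure(C)). -/

import Mathlib

/-!
An arbitrary union of h-open sets is h-open, so the h-closure of any set is itself h-closed, and a
set that contains its own h-closure is h-closed. Given h-continuity, `ψ ⁻¹' closure C` is an
h-closed set containing `ψ ⁻¹' C`, so it contains the h-closure. Conversely, for `O` open the
inclusion applied to the closed set `Oᶜ` says that `ψ ⁻¹' Oᶜ` contains its own h-closure.
-/

/-- A subset `B` of a topological space is *h-open* if `B ⊆ interior (B ∪ O)`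
for every open set `O` with `O ≠ ∅` and `O ≠ univ`. -/
def HOpen {X : Type*} [TopologicalSpace X] (B : Set X) : Prop :=
  ∀ O : Set X, IsOpen O → O ≠ ∅ → O ≠ Set.univ → B ⊆ interior (B ∪ O)

/-- A subset is *h-closed* if its complement is h-open. -/
def HClosed {X : Type*} [TopologicalSpace X] (B : Set X) : Prop :=
  HOpen Bᶜ

/-- The *h-interior* of `B`: the union of all h-open sets contained in `B`. -/
def hInterior {X : Type*} [TopologicalSpace X] (B : Set X) : Set X :=
  ⋃₀ {C : Set X | HOpen C ∧ C ⊆ B}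

/-- The *h-closure* of `B`: the intersection of all h-closed sets containing `B`. -/
def hClosure {X : Type*} [TopologicalSpace X] (B : Set X) : Set X :=
  ⋂₀ {C : Set X | HClosed C ∧ B ⊆ C}

/-- A function is *h-continuous* if the preimage of every open set is h-open. -/
def HContinuous {X Y : Type*} [TopologicalSpace X] [TopologicalSpace Y] (ψ : X → Y) : Prop :=
  ∀ O : Set Y, IsOpen O → HOpen (ψ ⁻¹' O)

/-- A function is an *h-open map* if the image of every open set is h-open. -/
def HOpenMap {X Y : Type*} [TopologicalSpace X] [TopologicalSpace Y] (ψ : X → Y) : Prop :=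
  ∀ O : Set X, IsOpen O → HOpen (ψ '' O)

/-- A function is *h-irresolute* if the preimage of every h-open set is h-open. -/
def HIrresolute {X Y : Type*} [TopologicalSpace X] [TopologicalSpace Y] (ψ : X → Y) : Prop :=
  ∀ O : Set Y, HOpen O → HOpen (ψ ⁻¹' O)

/-- A function is *h-totally continuous* if the preimage of every h-open set is clopen. -/
def HTotallyContinuous {X Y : Type*} [TopologicalSpace X] [TopologicalSpace Y] (ψ : X → Y) : Prop :=
  ∀ O : Set Y, HOpen O → IsClopen (ψ ⁻¹' O)

/-- A function is *h-contra continuous* if the preimage of every open set is h-closed. -/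
def HContraContinuous {X Y : Type*} [TopologicalSpace X] [TopologicalSpace Y] (ψ : X → Y) : Prop :=
  ∀ O : Set Y, IsOpen O → HClosed (ψ ⁻¹' O)

theorem HOpen.sUnion {X : Type*} [TopologicalSpace X] {S : Set (Set X)}
    (hS : ∀ B ∈ S, HOpen B) : HOpen (⋃₀ S) := by
  rintro O hO hne huniv x ⟨B, hB, hx⟩
  exact interior_mono (Set.union_subset_union_left O (Set.subset_sUnion_of_mem hB))
    (hS B hB O hO hne huniv hx)

theorem hClosed_hClosure {X : Type*} [TopologicalSpace X] (B : Set X) :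
    HClosed (hClosure B) := by
  unfold HClosed hClosure
  rw [Set.compl_sInter]
  apply HOpen.sUnion
  rintro _ ⟨C, hC, rfl⟩
  exact hC.1

theorem subset_hClosure {X : Type*} [TopologicalSpace X] (B : Set X) : B ⊆ hClosure B :=
  Set.subset_sInter fun _ hC => hC.2

theorem hContinuous_iff_hClosure_preimage {X Y : Type*} [TopologicalSpace X] [TopologicalSpace Y]
    (ψ : X → Y) : HContinuous ψ ↔ ∀ C : Set Y, hClosure (ψ ⁻¹' C) ⊆ ψ ⁻¹' closure C := by
  constructor
  · intro h C
    exact Set.sInter_subset_of_mem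
      ⟨h _ isClosed_closure.isOpen_compl, Set.preimage_mono subset_closure⟩
  · intro h O hO
    have hsub : hClosure (ψ ⁻¹' Oᶜ) ⊆ ψ ⁻¹' Oᶜ := by
      simpa only [hO.isClosed_compl.closure_eq] using h Oᶜ
    have hcl : HClosed (ψ ⁻¹' Oᶜ) :=
      hsub.antisymm (subset_hClosure _) ▸ hClosed_hClosure (ψ ⁻¹' Oᶜ)
    simpa only [HClosed, Set.preimage_compl, compl_compl] using hcl
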